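/- Let M, N ≥ 1 and let 𝕊, 𝕋 ⊆ [−1/2, 1/2]² be disjoint measurable sets. If v ∈ ℂ^{MN} is a unit eigenvector of B_{(M,N),𝕊} with eigenvalue λ, then ‖B_{(M,N),𝕋}·v‖² ≤ 1 − λ², where ‖·‖ is the Euclidean norm on ℂ^{MN}. -/

import Mathlib

open MeasureTheory Matrix Real Set

/-- The 2-D prolate matrix `B_{(M,N),𝕎}`, indexed by pairs, with entries
`∫_𝕎 exp(2πi (f (m−p) + g (n−q))) df dg`. -/
noncomputable def prolate2D (M N : ℕ) (𝕎 : Set (ℝ × ℝ)) :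
    Matrix (Fin M × Fin N) (Fin M × Fin N) ℂ :=
  fun i j => ∫ fg in 𝕎,
    Complex.exp (2 * (Real.pi : ℂ) * Complex.I *
      ((fg.1 : ℂ) * (((i.1 : ℕ) : ℂ) - ((j.1 : ℕ) : ℂ)) +
       (fg.2 : ℂ) * (((i.2 : ℕ) : ℂ) - ((j.2 : ℕ) : ℂ))))

/-!
The prolate matrix of a band `W` is the Gram matrix, in `L²(W)`, of exponentials that are
orthonormal in `L²` of the unit square. Gram matrices are additive and monotone in the measure, so
disjoint bands `S` and `T` in the square give positive semidefinite matrices with `B_S + B_T ≤ 1`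
in the Loewner order. An element `0 ≤ a ≤ 1` of a star-ordered ring satisfies `a² ≤ a`, whence
`B_S² + B_T² ≤ 1`, that is, `‖B_S v‖² + ‖B_T v‖² ≤ ‖v‖²` for every `v`.
-/

section StarOrderedRing

variable {R : Type*} [Ring R] [PartialOrder R] [StarRing R] [StarOrderedRing R] {a b : R}

lemma mul_self_le_self_of_nonneg_of_le_one (ha : 0 ≤ a) (ha_one : a ≤ 1) : a * a ≤ a := by
  have one_sub_nonneg : 0 ≤ 1 - a := sub_nonneg.mpr ha_one
  have decomposition : a - a * a = a * (1 - a) * a + (1 - a) * a * (1 - a) := by noncomm_ring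
  rw [← sub_nonneg, decomposition]
  exact add_nonneg (conjugate_nonneg_of_nonneg one_sub_nonneg ha)
    (conjugate_nonneg_of_nonneg ha one_sub_nonneg)

lemma mul_self_add_mul_self_le_one (ha : 0 ≤ a) (hb : 0 ≤ b) (hab : a + b ≤ 1) :
    a * a + b * b ≤ 1 :=
  (add_le_add
    (mul_self_le_self_of_nonneg_of_le_one ha ((le_add_of_nonneg_right hb).trans hab))
    (mul_self_le_self_of_nonneg_of_le_one hb ((le_add_of_nonneg_left ha).trans hab))).trans hab

end StarOrderedRing

section LoewnerOrder

open scoped MatrixOrder ComplexOrder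

variable {𝕜 m n : Type*} [RCLike 𝕜] [Fintype m] [Fintype n]

lemma ofReal_sum_norm_sq_eq_star_dotProduct (v : n → 𝕜) :
    ((∑ i, ‖v i‖ ^ 2 : ℝ) : 𝕜) = star v ⬝ᵥ v := by
  simp [dotProduct, RCLike.conj_mul]

lemma ofReal_sum_norm_sq_mulVec (A : Matrix m n 𝕜) (v : n → 𝕜) :
    ((∑ i, ‖(A *ᵥ v) i‖ ^ 2 : ℝ) : 𝕜) = star v ⬝ᵥ (Aᴴ * A) *ᵥ v := by
  rw [ofReal_sum_norm_sq_eq_star_dotProduct, star_mulVec, ← dotProduct_mulVec, mulVec_mulVec]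

lemma sum_norm_sq_mulVec_add_le [DecidableEq n] {A B : Matrix n n 𝕜}
    (hA : 0 ≤ A) (hB : 0 ≤ B) (hAB : A + B ≤ 1) (v : n → 𝕜) :
    ∑ i, ‖(A *ᵥ v) i‖ ^ 2 + ∑ i, ‖(B *ᵥ v) i‖ ^ 2 ≤ ∑ i, ‖v i‖ ^ 2 := by
  have squares_le_one : (1 - (Aᴴ * A + Bᴴ * B)).PosSemidef := by
    rw [hA.posSemidef.1.eq, hB.posSemidef.1.eq]
    exact mul_self_add_mul_self_le_one hA hB hAB
  have form_nonneg := squares_le_one.dotProduct_mulVec_nonneg v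
  rw [sub_mulVec, add_mulVec, one_mulVec, dotProduct_sub, dotProduct_add,
    ← ofReal_sum_norm_sq_mulVec, ← ofReal_sum_norm_sq_mulVec,
    ← ofReal_sum_norm_sq_eq_star_dotProduct] at form_nonneg
  exact sub_nonneg.mp (mod_cast form_nonneg)

end LoewnerOrder

section IntegralGram

open scoped MatrixOrder

variable {𝕜 E α ι : Type*} [RCLike 𝕜] [NormedAddCommGroup E] [InnerProductSpace 𝕜 E]
  [MeasurableSpace α] {μ ν : Measure α} {φ : ι → α → E}

variable (𝕜) in
/-- The Gram matrix of a family of functions with respect to `∫ ⟪·, ·⟫ ∂μ`. Unlike `Matrix.gram`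
applied to elements of `Lp E 2 μ`, it takes plain functions, so that the measure can be varied. -/
noncomputable def integralGram (φ : ι → α → E) (μ : Measure α) : Matrix ι ι 𝕜 :=
  .of fun i j ↦ ∫ x, inner 𝕜 (φ i x) (φ j x) ∂μ

lemma integrable_inner_of_memLp_two {f g : α → E} (hf : MemLp f 2 μ) (hg : MemLp g 2 μ) :
    Integrable (fun x ↦ inner 𝕜 (f x) (g x)) μ := by
  refine (L2.integrable_inner (𝕜 := 𝕜) hf.toLp hg.toLp).congr ?_
  filter_upwards [hf.coeFn_toLp, hg.coeFn_toLp] with x hfx hgx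
  rw [hfx, hgx]

lemma integralGram_eq_gram (hφ : ∀ i, MemLp (φ i) 2 μ) :
    integralGram 𝕜 φ μ = gram 𝕜 fun i ↦ (hφ i).toLp := by
  ext i j
  rw [gram_apply, L2.inner_def]
  refine integral_congr_ae ?_
  filter_upwards [(hφ i).coeFn_toLp, (hφ j).coeFn_toLp] with x hi hj
  rw [hi, hj]

lemma integralGram_nonneg [Finite ι] (hφ : ∀ i, MemLp (φ i) 2 μ) : 0 ≤ integralGram 𝕜 φ μ := by
  rw [integralGram_eq_gram hφ]
  exact (posSemidef_gram 𝕜 _).nonneg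

lemma integralGram_add_measure (hμ : ∀ i, MemLp (φ i) 2 μ) (hν : ∀ i, MemLp (φ i) 2 ν) :
    integralGram 𝕜 φ (μ + ν) = integralGram 𝕜 φ μ + integralGram 𝕜 φ ν := by
  ext i j
  exact integral_add_measure (integrable_inner_of_memLp_two (hμ i) (hμ j))
    (integrable_inner_of_memLp_two (hν i) (hν j))

lemma integralGram_mono [Finite ι] [IsFiniteMeasure μ] (hμν : μ ≤ ν)
    (hφ : ∀ i, MemLp (φ i) 2 ν) : integralGram 𝕜 φ μ ≤ integralGram 𝕜 φ ν := by
  have memLp_sub (i : ι) : MemLp (φ i) 2 (ν - μ) := (hφ i).mono_measure Measure.sub_le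
  rw [← Measure.sub_add_cancel_of_le hμν,
    integralGram_add_measure memLp_sub fun i ↦ (hφ i).mono_measure hμν]
  exact le_add_of_nonneg_left (integralGram_nonneg memLp_sub)

end IntegralGram

lemma integral_exp_two_pi_I_mul_int (a : ℝ) (n : ℤ) :
    ∫ x in a..a + 1, Complex.exp (2 * π * Complex.I * (x * n)) = if n = 0 then 1 else 0 := by
  split_ifs with hn
  · simp [hn]
  · have frequency_ne_zero : 2 * π * Complex.I * n ≠ 0 :=
      mul_ne_zero Complex.two_pi_I_ne_zero (Int.cast_ne_zero.mpr hn)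
    have endpoints_eq : Complex.exp (2 * π * Complex.I * n * (a + 1 : ℝ)) =
        Complex.exp (2 * π * Complex.I * n * a) :=
      Complex.exp_eq_exp_iff_exists_int.mpr ⟨n, by push_cast; ring⟩
    simp_rw [mul_comm _ (n : ℂ), ← mul_assoc (2 * π * Complex.I)]
    rw [integral_exp_mul_complex frequency_ne_zero, endpoints_eq, sub_self, zero_div]

section Prolate

open scoped MatrixOrder

variable {M N : ℕ} {S T W : Set (ℝ × ℝ)}

/-- The square `[-1/2, 1/2]²` of normalized frequencies, a period cell of the exponentials. -/
def unitSquare : Set (ℝ × ℝ) := Icc (-(1 / 2)) (1 / 2) ×ˢ Icc (-(1 / 2)) (1 / 2)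

lemma volume_unitSquare_ne_top : volume unitSquare ≠ ⊤ :=
  (isCompact_Icc.prod isCompact_Icc).measure_ne_top

/-- The exponential of index `j`, as a function of the frequency. Its exponent is negative because
the inner product is conjugate-linear in its first argument. -/
noncomputable def exponentialMode (j : Fin M × Fin N) (x : ℝ × ℝ) : ℂ :=
  Complex.exp (-(2 * π * Complex.I * (x.1 * (j.1 : ℕ) + x.2 * (j.2 : ℕ))))

lemma memLp_exponentialMode (j : Fin M × Fin N) (μ : Measure (ℝ × ℝ)) [IsFiniteMeasure μ] :
    MemLp (exponentialMode j) 2 μ := by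
  have continuous_mode : Continuous (exponentialMode j) := by unfold exponentialMode; fun_prop
  refine .of_bound continuous_mode.aestronglyMeasurable 1 (.of_forall fun x ↦ ?_)
  simp [exponentialMode, Complex.norm_exp]

lemma inner_exponentialMode (i j : Fin M × Fin N) (x : ℝ × ℝ) :
    inner ℂ (exponentialMode i x) (exponentialMode j x) =
      Complex.exp (2 * π * Complex.I *
        (x.1 * ((i.1 : ℕ) - (j.1 : ℕ)) + x.2 * ((i.2 : ℕ) - (j.2 : ℕ)))) := by
  simp only [exponentialMode, RCLike.inner_apply, ← Complex.exp_conj, ← Complex.exp_add, map_neg,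
    map_mul, map_add, Complex.conj_ofReal, Complex.conj_I, map_natCast, map_ofNat]
  congr 1
  ring

lemma prolate2D_eq_integralGram (W : Set (ℝ × ℝ)) :
    prolate2D M N W = integralGram ℂ exponentialMode (volume.restrict W) := by
  ext i j
  simp only [integralGram, of_apply, inner_exponentialMode, prolate2D]

lemma setIntegral_exp_two_pi_I_mul_natCast_sub (a b : ℕ) :
    ∫ x in Icc (-(1 / 2) : ℝ) (1 / 2), Complex.exp (2 * π * Complex.I * (x * (a - b))) =
      if a = b then 1 else 0 := by
  rw [integral_Icc_eq_integral_Ioc, ← intervalIntegral.integral_of_le (by norm_num)]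
  convert integral_exp_two_pi_I_mul_int (-(1 / 2)) (a - b) using 2
  · norm_num
  · norm_num
  · simp [sub_eq_zero]

lemma prolate2D_unitSquare : prolate2D M N unitSquare = 1 := by
  ext i j
  simp only [prolate2D, unitSquare, mul_add, Complex.exp_add]
  rw [Measure.volume_eq_prod, setIntegral_prod_mul
    (fun f : ℝ ↦ Complex.exp (2 * π * Complex.I * (f * ((i.1 : ℕ) - (j.1 : ℕ)))))
    (fun g : ℝ ↦ Complex.exp (2 * π * Complex.I * (g * ((i.2 : ℕ) - (j.2 : ℕ))))),
    setIntegral_exp_two_pi_I_mul_natCast_sub, setIntegral_exp_two_pi_I_mul_natCast_sub]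
  simp [one_apply, Prod.ext_iff, Fin.ext_iff, ← ite_and, and_comm]

lemma prolate2D_nonneg (hW : volume W ≠ ⊤) : 0 ≤ prolate2D M N W := by
  have : IsFiniteMeasure (volume.restrict W) := isFiniteMeasure_restrict.mpr hW
  rw [prolate2D_eq_integralGram]
  exact integralGram_nonneg fun j ↦ memLp_exponentialMode j _

lemma prolate2D_mono (hST : S ⊆ T) (hT : volume T ≠ ⊤) : prolate2D M N S ≤ prolate2D M N T := by
  have : IsFiniteMeasure (volume.restrict S) :=
    isFiniteMeasure_restrict.mpr (measure_ne_top_of_subset hST hT)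
  have : IsFiniteMeasure (volume.restrict T) := isFiniteMeasure_restrict.mpr hT
  rw [prolate2D_eq_integralGram, prolate2D_eq_integralGram]
  exact integralGram_mono (Measure.restrict_mono_set _ hST) fun j ↦ memLp_exponentialMode j _

lemma prolate2D_union (hT : MeasurableSet T) (hdisj : Disjoint S T)
    (hS_fin : volume S ≠ ⊤) (hT_fin : volume T ≠ ⊤) :
    prolate2D M N (S ∪ T) = prolate2D M N S + prolate2D M N T := by
  have : IsFiniteMeasure (volume.restrict S) := isFiniteMeasure_restrict.mpr hS_fin
  have : IsFiniteMeasure (volume.restrict T) := isFiniteMeasure_restrict.mpr hT_fin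
  simp only [prolate2D_eq_integralGram, Measure.restrict_union hdisj hT]
  exact integralGram_add_measure (fun j ↦ memLp_exponentialMode j _)
    fun j ↦ memLp_exponentialMode j _

lemma prolate2D_le_one (hW : W ⊆ unitSquare) : prolate2D M N W ≤ 1 :=
  prolate2D_unitSquare (M := M) (N := N) ▸ prolate2D_mono hW volume_unitSquare_ne_top

theorem prolate2D_disjoint_band_energy_bound_general
    (hT : MeasurableSet T) (hS_sub : S ⊆ unitSquare) (hT_sub : T ⊆ unitSquare)
    (hdisj : Disjoint S T) (v : Fin M × Fin N → ℂ) :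
    ∑ i, ‖(prolate2D M N S *ᵥ v) i‖ ^ 2 + ∑ i, ‖(prolate2D M N T *ᵥ v) i‖ ^ 2 ≤
      ∑ i, ‖v i‖ ^ 2 := by
  have hS_fin := measure_ne_top_of_subset hS_sub volume_unitSquare_ne_top
  have hT_fin := measure_ne_top_of_subset hT_sub volume_unitSquare_ne_top
  refine sum_norm_sq_mulVec_add_le (prolate2D_nonneg hS_fin) (prolate2D_nonneg hT_fin) ?_ v
  rw [← prolate2D_union hT hdisj hS_fin hT_fin]
  exact prolate2D_le_one (union_subset hS_sub hT_sub)

end Prolate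

theorem prolate2D_disjoint_band_energy_bound
    (M N : ℕ) (hM : 1 ≤ M) (hN : 1 ≤ N)
    (S T : Set (ℝ × ℝ)) (hSmeas : MeasurableSet S) (hTmeas : MeasurableSet T)
    (hSsub : S ⊆ Set.Icc (-(1 / 2) : ℝ) (1 / 2) ×ˢ Set.Icc (-(1 / 2) : ℝ) (1 / 2))
    (hTsub : T ⊆ Set.Icc (-(1 / 2) : ℝ) (1 / 2) ×ˢ Set.Icc (-(1 / 2) : ℝ) (1 / 2))
    (hdisj : Disjoint S T)
    (v : Fin M × Fin N → ℂ) (hunit : ∑ i, ‖v i‖ ^ 2 = 1)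
    (lam : ℝ) (heig : (prolate2D M N S).mulVec v = (lam : ℂ) • v) :
    ∑ i, ‖(prolate2D M N T).mulVec v i‖ ^ 2 ≤ 1 - lam ^ 2 := by
  have energy_bound := prolate2D_disjoint_band_energy_bound_general hTmeas hSsub hTsub hdisj v
  simp only [heig, Pi.smul_apply, norm_smul, mul_pow, Complex.norm_real, norm_eq_abs, sq_abs,
    ← Finset.mul_sum, hunit, mul_one] at energy_bound
  exact le_sub_iff_add_le'.mpr energy_bound
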